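/- Let d ≥ 2, λ > 0, and α, β ∈ ℝ with β ≠ 0 and αβ ≥ 0, and let Ψ be the harmonic weight function. Then there exists a constant C > 0, depending only on φ, λ, d and α/β, such that for all R > 0 and all (t,x) ∈ Q_R the estimate |Δ_x(Ψ(x) φ_R(t,x))| ≤ C R^{−2} Ψ(x) (φ_R^*(t,x))^{λ/(λ+2)} holds. -/

import Mathlib

open MeasureTheory Real Set

noncomputable section

/-- The Laplacian of a function on `ℝ^d`, as the sum of second partial derivatives. -/
def lap {d : ℕ} (f : EuclideanSpace ℝ (Fin d) → ℝ) (x : EuclideanSpace ℝ (Fin d)) : ℝ :=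
  ∑ i : Fin d, iteratedFDeriv ℝ 2 f x ![EuclideanSpace.single i 1, EuclideanSpace.single i 1]

/-- The harmonic weight function `Ψ`. -/
def Psi (d : ℕ) (α β : ℝ) (x : EuclideanSpace ℝ (Fin d)) : ℝ :=
  if β = 0 then 1
  else if d = 2 then Real.log ‖x‖ + α / β
  else 1 - ‖x‖ ^ ((2 : ℝ) - d) + (α / β) * ((d : ℝ) - 2)

/-- `φ*`: the modification of the cutoff `φ` vanishing on `[0, 1/2)`. -/
def phiStar (φ : ℝ → ℝ) (ρ : ℝ) : ℝ := if ρ < 1 / 2 then 0 else φ ρ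

/-- The standing assumptions on the cutoff function `φ`: smooth, `0 ≤ φ ≤ 1`, `φ ≡ 1` on
`[0,1/2]`, decreasing on `(1/2, 1)` and `φ ≡ 0` on `[1, ∞)`. -/
def CutoffHyp (φ : ℝ → ℝ) : Prop :=
  ContDiff ℝ (⊤ : ℕ∞) φ ∧ (∀ ρ, 0 ≤ φ ρ ∧ φ ρ ≤ 1) ∧ (∀ ρ ∈ Icc (0 : ℝ) (1 / 2), φ ρ = 1) ∧
  AntitoneOn φ (Ioo (1 / 2 : ℝ) 1) ∧ ∀ ρ, (1 : ℝ) ≤ ρ → φ ρ = 0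

/-- `φ_R(t,x) = (φ((t² + (|x|-1)⁴)/R⁴))^{λ+2}`. -/
def phiR {d : ℕ} (φ : ℝ → ℝ) (lam R t : ℝ) (x : EuclideanSpace ℝ (Fin d)) : ℝ :=
  φ ((t ^ 2 + (‖x‖ - 1) ^ 4) / R ^ 4) ^ (lam + 2)

/-- `φ_R^*(t,x) = (φ*((t² + (|x|-1)⁴)/R⁴))^{λ+2}`. -/
def phiRStar {d : ℕ} (φ : ℝ → ℝ) (lam R t : ℝ) (x : EuclideanSpace ℝ (Fin d)) : ℝ :=
  phiStar φ ((t ^ 2 + (‖x‖ - 1) ^ 4) / R ^ 4) ^ (lam + 2)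

lemma fderiv_radial_aux {d : ℕ} (F : ℝ → ℝ) (F1 : ℝ) (y : EuclideanSpace ℝ (Fin d))
    (hy : 0 < ‖y‖) (hF : HasDerivAt F F1 ‖y‖) :
    HasFDerivAt (fun z : EuclideanSpace ℝ (Fin d) => F ‖z‖) ((F1 / ‖y‖) • innerSL ℝ y) y := by
  have hne : ‖y‖ ^ 2 ≠ 0 := by positivity
  have h1 : HasFDerivAt (fun z : EuclideanSpace ℝ (Fin d) => ‖z‖ ^ 2) (2 • innerSL ℝ y) y :=
    (hasStrictFDerivAt_norm_sq y).hasFDerivAt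
  have h2 := h1.sqrt hne
  have h3 : (fun z : EuclideanSpace ℝ (Fin d) => √(‖z‖ ^ 2)) = fun z => ‖z‖ := by
    funext z; exact Real.sqrt_sq (norm_nonneg z)
  rw [h3, Real.sqrt_sq (norm_nonneg y)] at h2
  have h4 := hF.comp_hasFDerivAt y h2
  refine h4.congr_fderiv ?_
  ext v
  simp
  field_simp

lemma lap_radial {d : ℕ} (F F1 : ℝ → ℝ) (F2 : ℝ) (x : EuclideanSpace ℝ (Fin d))
    (hx : 1 < ‖x‖) (hF : ∀ r, 1 < r → HasDerivAt F (F1 r) r) (hF1 : HasDerivAt F1 F2 ‖x‖) :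
    lap (fun y => F ‖y‖) x = F2 + ((d : ℝ) - 1) / ‖x‖ * F1 ‖x‖ := by
  have hx0 : 0 < ‖x‖ := by linarith
  have hev : fderiv ℝ (fun y : EuclideanSpace ℝ (Fin d) => F ‖y‖) =ᶠ[nhds x]
      fun y => (F1 ‖y‖ / ‖y‖) • innerSL ℝ y := by
    have : ∀ᶠ y : EuclideanSpace ℝ (Fin d) in nhds x, 1 < ‖y‖ :=
      continuous_norm.continuousAt.eventually (lt_mem_nhds hx)
    filter_upwards [this] with y hy
    exact (fderiv_radial_aux F (F1 ‖y‖) y (by linarith) (hF _ hy)).fderiv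
  have ha : HasDerivAt (fun r => F1 r / r) ((F2 * ‖x‖ - F1 ‖x‖ * 1) / ‖x‖ ^ 2) ‖x‖ :=
    hF1.div (hasDerivAt_id _) hx0.ne'
  have h2 := fderiv_radial_aux _ _ x hx0 ha
  have h3 : HasFDerivAt (fun y : EuclideanSpace ℝ (Fin d) => innerSL ℝ y)
      (innerSL ℝ : EuclideanSpace ℝ (Fin d) →L[ℝ] _) x :=
    (innerSL ℝ : EuclideanSpace ℝ (Fin d) →L[ℝ] _).hasFDerivAt
  have h4 := h2.smul h3
  have h5 := (h4.congr_of_eventuallyEq hev).fderiv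
  unfold lap
  simp only [iteratedFDeriv_two_apply]
  have key : ∀ i : Fin d, fderiv ℝ (fderiv ℝ (fun y : EuclideanSpace ℝ (Fin d) => F ‖y‖)) x
      (EuclideanSpace.single i 1) (EuclideanSpace.single i 1) =
      F1 ‖x‖ / ‖x‖ + ((F2 * ‖x‖ - F1 ‖x‖) / ‖x‖ ^ 3) * (x i) ^ 2 := by
    intro i
    rw [h5]
    have hii : (innerSL ℝ (EuclideanSpace.single i (1:ℝ) : EuclideanSpace ℝ (Fin d)))
        (EuclideanSpace.single i 1) = 1 := by
      rw [innerSL_apply_apply]; simp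
    simp [EuclideanSpace.inner_single_right, hii]
    field_simp
  simp only [Matrix.cons_val_zero, Matrix.cons_val_one]
  rw [Finset.sum_congr rfl (fun i _ => key i), Finset.sum_add_distrib, ← Finset.mul_sum,
    ← EuclideanSpace.real_norm_sq_eq]
  simp
  field_simp
  ring

lemma deriv_bound_aux (f : ℝ → ℝ) (hf : Continuous f) : ∃ M > 0, ∀ ρ ∈ Icc (0:ℝ) 1, |f ρ| ≤ M := by
  obtain ⟨M, hM⟩ := isCompact_Icc.exists_bound_of_continuousOn (hf.continuousOn (s := Icc (0:ℝ) 1))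
  refine ⟨max M 1, by positivity, fun ρ h => (hM ρ h).trans (le_max_left _ _)⟩

set_option maxHeartbeats 2000000 in
lemma radial_est (d : ℕ) (hd : 2 ≤ d) (lam : ℝ) (hlam : 0 < lam)
    (φ : ℝ → ℝ) (hφ : CutoffHyp φ) (P P1 : ℝ → ℝ)
    (hP : ∀ r, 1 < r → HasDerivAt P (P1 r) r)
    (hP1 : ∀ r, 1 < r → HasDerivAt P1 (-(((d : ℝ) - 1) / r * P1 r)) r)
    (hP1n : ∀ r, 1 < r → 0 ≤ P1 r)
    (hPP : ∀ r, 1 < r → P1 r * (r - 1) ≤ P r) :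
    ∃ C > (0 : ℝ), ∀ R > (0 : ℝ), ∀ (t : ℝ) (x : EuclideanSpace ℝ (Fin d)),
      0 < t → 1 < ‖x‖ → t ^ 2 + (‖x‖ - 1) ^ 4 < R ^ 4 →
      |lap (fun y => P ‖y‖ * phiR φ lam R t y) x|
        ≤ C * R ^ (-2 : ℝ) * P ‖x‖ * phiRStar φ lam R t x ^ (lam / (lam + 2)) := by
  obtain ⟨hsm, h01, hone, -, -⟩ := hφ
  have hsm2 : ContDiff ℝ 2 φ := hsm.of_le (WithTop.coe_le_coe.2 (le_top : (2 : ℕ∞) ≤ ⊤))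
  have hd1c : ContDiff ℝ 1 (deriv φ) := ((contDiff_succ_iff_deriv (n := 1)).1 hsm2).2.2
  have hd2c : Continuous (deriv (deriv φ)) := hd1c.continuous_deriv le_rfl
  have hφ1 : ∀ ρ, HasDerivAt φ (deriv φ ρ) ρ := fun ρ =>
    (hsm2.differentiable (by norm_num) ρ).hasDerivAt
  have hφ2 : ∀ ρ, HasDerivAt (deriv φ) (deriv (deriv φ) ρ) ρ := fun ρ =>
    (hd1c.differentiable (by norm_num) ρ).hasDerivAt
  obtain ⟨M, hM0, hM⟩ := deriv_bound_aux _ hd1c.continuous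
  obtain ⟨N, hN0, hN⟩ := deriv_bound_aux _ hd2c
  set G1 : ℝ → ℝ := fun ρ => (lam + 2) * (φ ρ ^ (lam + 1) * deriv φ ρ) with hG1d
  set G2 : ℝ → ℝ := fun ρ => (lam + 2) *
    ((deriv φ ρ * (lam + 1) * φ ρ ^ lam) * deriv φ ρ + φ ρ ^ (lam + 1) * deriv (deriv φ) ρ) with hG2d
  have hG : ∀ ρ, HasDerivAt (fun ρ => φ ρ ^ (lam + 2)) (G1 ρ) ρ := by
    intro ρ
    have := (hφ1 ρ).rpow_const (p := lam + 2) (Or.inr (by linarith))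
    convert this using 1
    rw [hG1d, show lam + 2 - 1 = lam + 1 by ring]
    ring
  have hG1 : ∀ ρ, HasDerivAt G1 (G2 ρ) ρ := by
    intro ρ
    have h1 := (hφ1 ρ).rpow_const (p := lam + 1) (Or.inr (by linarith))
    rw [show lam + 1 - 1 = lam by ring] at h1
    exact (h1.mul (hφ2 ρ)).const_mul (lam + 2)
  set K1 : ℝ := (lam + 2) * M with hK1
  set K2 : ℝ := (lam + 2) * (M * (lam + 1) * M + N) with hK2
  have hK1p : 0 < K1 := by positivity
  have hK2p : 0 < K2 := by positivity
  have hpow : ∀ ρ, φ ρ ^ (lam + 1) ≤ φ ρ ^ lam := fun ρ =>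
    Real.rpow_le_rpow_of_exponent_ge_of_imp (h01 ρ).1 (h01 ρ).2 (by linarith)
      (fun _ h => absurd h (by linarith))
  have hb1 : ∀ ρ ∈ Icc (0:ℝ) 1, |G1 ρ| ≤ K1 * φ ρ ^ lam := by
    intro ρ hρ
    have h0 := Real.rpow_nonneg (h01 ρ).1 (lam + 1)
    have h0' := Real.rpow_nonneg (h01 ρ).1 lam
    rw [hG1d, hK1]
    simp only [abs_mul, abs_of_nonneg h0]
    rw [abs_of_pos (by linarith : 0 < lam + 2)]
    calc (lam + 2) * (φ ρ ^ (lam + 1) * |deriv φ ρ|) ≤ (lam + 2) * (φ ρ ^ lam * M) := by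
          exact mul_le_mul_of_nonneg_left
            (mul_le_mul (hpow ρ) (hM ρ hρ) (abs_nonneg _) h0') (by linarith)
      _ = _ := by ring
  have hb2 : ∀ ρ ∈ Icc (0:ℝ) 1, |G2 ρ| ≤ K2 * φ ρ ^ lam := by
    intro ρ hρ
    have h0 := Real.rpow_nonneg (h01 ρ).1 (lam + 1)
    have h0' := Real.rpow_nonneg (h01 ρ).1 lam
    have hm := hM ρ hρ
    rw [hG2d, hK2]
    simp only [abs_mul]
    rw [abs_of_pos (by linarith : 0 < lam + 2)]
    have e1 : |deriv φ ρ * (lam + 1) * φ ρ ^ lam * deriv φ ρ| ≤ M * (lam + 1) * φ ρ ^ lam * M := by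
      rw [abs_mul, abs_mul, abs_mul, abs_of_nonneg h0', abs_of_pos (by linarith : 0 < lam + 1)]
      gcongr
    have e2 : |φ ρ ^ (lam + 1) * deriv (deriv φ) ρ| ≤ φ ρ ^ lam * N := by
      rw [abs_mul, abs_of_nonneg h0]
      exact mul_le_mul (hpow ρ) (hN ρ hρ) (abs_nonneg _) h0'
    calc _ ≤ (lam + 2) * (M * (lam + 1) * φ ρ ^ lam * M + φ ρ ^ lam * N) := by
          gcongr
          exact (abs_add_le _ _).trans (add_le_add e1 e2)
      _ = _ := by ring
  have hdR : (1:ℝ) ≤ (d:ℝ) - 1 := by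
    have : (2:ℝ) ≤ d := by exact_mod_cast hd
    linarith
  refine ⟨(20 + 4 * ((d:ℝ) - 1)) * K1 + 16 * K2, by positivity, ?_⟩
  intro R hR t x ht hx hQ
  set r := ‖x‖ with hr
  set q : ℝ → ℝ := fun r => (t ^ 2 + (r - 1) ^ 4) / R ^ 4 with hq
  set q1 : ℝ → ℝ := fun r => 4 * (r - 1) ^ 3 / R ^ 4 with hq1
  have hqd : ∀ r, HasDerivAt q (q1 r) r := by
    intro r
    have := (((((hasDerivAt_id r).sub_const 1).pow 4).const_add (t ^ 2)).div_const (R ^ 4))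
    refine this.congr_deriv ?_
    simp [hq1]
  have hq1d : ∀ r, HasDerivAt q1 (12 * (r - 1) ^ 2 / R ^ 4) r := by
    intro r
    have := (((((hasDerivAt_id r).sub_const 1).pow 3).const_mul 4).div_const (R ^ 4))
    refine this.congr_deriv ?_
    simp
    ring
  have hH : ∀ r, HasDerivAt (fun r => φ (q r) ^ (lam + 2)) (G1 (q r) * q1 r) r := fun r =>
    (hG (q r)).comp r (hqd r)
  have hH1 : ∀ r, HasDerivAt (fun r => G1 (q r) * q1 r)
      (G2 (q r) * q1 r * q1 r + G1 (q r) * (12 * (r - 1) ^ 2 / R ^ 4)) r := fun r =>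
    ((hG1 (q r)).comp r (hqd r)).mul (hq1d r)
  have hlap : lap (fun y => P ‖y‖ * phiR φ lam R t y) x =
      2 * (P1 r * (G1 (q r) * q1 r)) + P r * (G2 (q r) * q1 r * q1 r
        + G1 (q r) * (12 * (r - 1) ^ 2 / R ^ 4)) +
        P r * (((d:ℝ) - 1) / r * (G1 (q r) * q1 r)) := by
    have := lap_radial (fun r => P r * φ (q r) ^ (lam + 2)) _ _ x hx
      (fun r h => (hP r h).mul (hH r)) (((hP1 r hx).mul (hH r)).add ((hP r hx).mul (hH1 r)))
    refine Eq.trans this ?_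
    simp only [← hr]
    ring
  rw [hlap]
  have hR4 : 0 < R ^ 4 := by positivity
  have hs0 : 0 < r - 1 := by linarith
  have hq0 : 0 < q r := by simp only [hq]; positivity
  have hq1' : q r < 1 := by simp only [hq]; rw [div_lt_one hR4]; exact hQ
  have hstar : phiRStar φ lam R t x ^ (lam / (lam + 2)) = phiStar φ (q r) ^ lam := by
    have hn : 0 ≤ phiStar φ (q r) := by
      unfold phiStar
      split_ifs
      · exact le_rfl
      · exact (h01 _).1
    unfold phiRStar
    change (phiStar φ (q r) ^ (lam + 2)) ^ (lam / (lam + 2)) = _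
    rw [← Real.rpow_mul hn]
    congr 1
    field_simp
  rw [hstar]
  have hPn : 0 ≤ P r := le_trans (mul_nonneg (hP1n r hx) hs0.le) (hPP r hx)
  by_cases hlt : q r < 1 / 2
  · have hev : φ =ᶠ[nhds (q r)] fun _ => 1 := by
      filter_upwards [Ioo_mem_nhds hq0 hlt] with z hz
      exact hone z ⟨hz.1.le, hz.2.le⟩
    have hz1 : deriv φ (q r) = 0 := by rw [hev.deriv_eq]; simp
    have hz2 : deriv (deriv φ) (q r) = 0 := by rw [hev.deriv.deriv_eq]; simp
    have e1 : G1 (q r) = 0 := by simp [hG1d, hz1]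
    have e2 : G2 (q r) = 0 := by simp [hG2d, hz1, hz2]
    have e3 : phiStar φ (q r) = 0 := by simp only [phiStar, if_pos hlt]
    rw [e1, e2, e3, Real.zero_rpow hlam.ne']
    simp
  · have e3 : phiStar φ (q r) = φ (q r) := by simp only [phiStar, if_neg hlt]
    rw [e3]
    have hmem : q r ∈ Icc (0:ℝ) 1 := ⟨hq0.le, hq1'.le⟩
    have b1 := hb1 _ hmem
    have b2 := hb2 _ hmem
    have hf0 := Real.rpow_nonneg (h01 (q r)).1 lam
    set f := φ (q r) ^ lam
    have hsR : r - 1 ≤ R := by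
      have : (r - 1) ^ 4 < R ^ 4 := by nlinarith [sq_nonneg t]
      exact (lt_of_pow_lt_pow_left₀ 4 hR.le this).le
    have hRp : R ^ (-2 : ℝ) = 1 / R ^ 2 := by
      rw [Real.rpow_neg hR.le]; norm_num
    rw [hRp]
    set s := r - 1 with hs
    have hs2 : s ^ 2 ≤ R ^ 2 := by gcongr
    have hq1n : 0 ≤ q1 r := by simp only [hq1]; positivity
    have c0 : s ^ 2 / R ^ 4 ≤ 1 / R ^ 2 := by
      rw [div_le_div_iff₀ (by positivity) (by positivity)]
      nlinarith [sq_nonneg R]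
    have c1 : q1 r = 4 * (s ^ 2 / R ^ 4) * s := by simp only [hq1, ← hs]; ring
    have c2 : P1 r * q1 r ≤ 4 * (1 / R ^ 2) * P r := by
      rw [c1]
      calc P1 r * (4 * (s ^ 2 / R ^ 4) * s) = 4 * (s ^ 2 / R ^ 4) * (P1 r * s) := by ring
        _ ≤ _ := by
          have := hPP r hx
          have := hP1n r hx
          gcongr
    have c3 : q1 r * q1 r ≤ 16 * (1 / R ^ 2) := by
      rw [c1]
      calc 4 * (s ^ 2 / R ^ 4) * s * (4 * (s ^ 2 / R ^ 4) * s)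
          = 16 * ((s ^ 2 / R ^ 4) * (s ^ 2 / R ^ 4) * s ^ 2) := by ring
        _ ≤ 16 * ((1 / R ^ 2) * (1 / R ^ 2) * R ^ 2) := by gcongr
        _ = _ := by field_simp
    have c4 : 12 * s ^ 2 / R ^ 4 ≤ 12 * (1 / R ^ 2) := by
      rw [mul_div_assoc]; gcongr
    have c5 : ((d:ℝ) - 1) / r * q1 r ≤ ((d:ℝ) - 1) * (4 * (1 / R ^ 2)) := by
      rw [c1]
      have hsr : s / r ≤ 1 := by rw [div_le_one (by linarith)]; linarith
      calc ((d:ℝ) - 1) / r * (4 * (s ^ 2 / R ^ 4) * s)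
          = ((d:ℝ) - 1) * (4 * (s ^ 2 / R ^ 4)) * (s / r) := by ring
        _ ≤ ((d:ℝ) - 1) * (4 * (1 / R ^ 2)) * 1 := by
          have : 0 ≤ s / r := by apply div_nonneg <;> linarith
          gcongr
        _ = _ := by ring
    have hP1r := hP1n r hx
    have t1 : |2 * (P1 r * (G1 (q r) * q1 r))| ≤ 2 * (4 * (1 / R ^ 2) * P r * (K1 * f)) := by
      rw [show 2 * (P1 r * (G1 (q r) * q1 r)) = 2 * ((P1 r * q1 r) * G1 (q r)) by ring, abs_mul,
        abs_mul, abs_of_nonneg (mul_nonneg hP1r hq1n), abs_two]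
      gcongr
    have t2 : |P r * (G2 (q r) * q1 r * q1 r)| ≤ P r * (K2 * f * (16 * (1 / R ^ 2))) := by
      rw [abs_mul, abs_of_nonneg hPn, mul_assoc (G2 (q r)), abs_mul,
        abs_of_nonneg (mul_nonneg hq1n hq1n)]
      gcongr
    have t3 : |P r * (G1 (q r) * (12 * s ^ 2 / R ^ 4))| ≤ P r * (K1 * f * (12 * (1 / R ^ 2))) := by
      have : 0 ≤ 12 * s ^ 2 / R ^ 4 := by positivity
      rw [abs_mul, abs_of_nonneg hPn, abs_mul, abs_of_nonneg this]
      gcongr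
    have t4 : |P r * (((d:ℝ) - 1) / r * (G1 (q r) * q1 r))| ≤
        P r * (((d:ℝ) - 1) * (4 * (1 / R ^ 2)) * (K1 * f)) := by
      have h0 : 0 ≤ ((d:ℝ) - 1) / r * q1 r :=
        mul_nonneg (div_nonneg (by linarith) (by linarith)) hq1n
      rw [show ((d:ℝ) - 1) / r * (G1 (q r) * q1 r) = (((d:ℝ) - 1) / r * q1 r) * G1 (q r) by ring,
        abs_mul, abs_of_nonneg hPn, abs_mul, abs_of_nonneg h0]
      gcongr
    rw [mul_add (P r)]
    refine (abs_add_le _ _).trans ((add_le_add ((abs_add_le _ _).trans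
      (add_le_add t1 ((abs_add_le _ _).trans (add_le_add t2 t3)))) t4).trans (le_of_eq ?_))
    ring

theorem Psi_phiR_laplacian_est (d : ℕ) (hd : 2 ≤ d) (lam : ℝ) (hlam : 0 < lam)
    (α β : ℝ) (hβ : β ≠ 0) (hαβ : 0 ≤ α * β)
    (φ : ℝ → ℝ) (hφ : CutoffHyp φ) :
    ∃ C > (0 : ℝ), ∀ R > (0 : ℝ), ∀ (t : ℝ) (x : EuclideanSpace ℝ (Fin d)),
      0 < t → 1 < ‖x‖ → t ^ 2 + (‖x‖ - 1) ^ 4 < R ^ 4 →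
      |lap (fun y => Psi d α β y * phiR φ lam R t y) x|
        ≤ C * R ^ (-2 : ℝ) * Psi d α β x * phiRStar φ lam R t x ^ (lam / (lam + 2)) := by
  have hc : 0 ≤ α / β := by
    rw [show α / β = α * β / β ^ 2 by field_simp]
    positivity
  by_cases h2 : d = 2
  · subst h2
    obtain ⟨C, hC, h⟩ := radial_est 2 le_rfl lam hlam φ hφ (fun r => Real.log r + α / β)
      (fun r => r⁻¹)
      (fun r hr => (Real.hasDerivAt_log (by linarith)).add_const _)
      (fun r hr => by
        refine (hasDerivAt_inv (by linarith : r ≠ 0)).congr_deriv ?_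
        have : r ≠ 0 := by linarith
        field_simp
        norm_num)
      (fun r hr => by
        have : 0 < r := by linarith
        positivity)
      (fun r hr => by
        have h0 : 0 < r := by linarith
        have := Real.one_sub_inv_le_log_of_pos h0
        have e : r⁻¹ * (r - 1) = 1 - r⁻¹ := by field_simp
        simp only [e]
        linarith)
    refine ⟨C, hC, ?_⟩
    have e : ∀ y : EuclideanSpace ℝ (Fin 2), Psi 2 α β y = Real.log ‖y‖ + α / β := by
      intro y; simp [Psi, hβ]
    simp only [e]
    exact h
  · have hd3 : (3:ℝ) ≤ d := by
      have : 3 ≤ d := by omega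
      exact_mod_cast this
    obtain ⟨C, hC, h⟩ := radial_est d hd lam hlam φ hφ
      (fun r => 1 - r ^ ((2 : ℝ) - d) + (α / β) * ((d : ℝ) - 2))
      (fun r => ((d : ℝ) - 2) * r ^ ((1 : ℝ) - d))
      (fun r hr => by
        have h0 : r ≠ 0 := by linarith
        refine (((Real.hasDerivAt_rpow_const (p := (2:ℝ) - d) (Or.inl h0)).const_sub 1).add_const
          _).congr_deriv ?_
        rw [show (2:ℝ) - d - 1 = 1 - d by ring]
        ring)
      (fun r hr => by
        have h0 : r ≠ 0 := by linarith
        refine ((Real.hasDerivAt_rpow_const (p := (1:ℝ) - d) (Or.inl h0)).const_mul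
          _).congr_deriv ?_
        rw [Real.rpow_sub_one h0]
        ring)
      (fun r hr => by
        have : 0 < r := by linarith
        have : 0 < r ^ ((1 : ℝ) - d) := Real.rpow_pos_of_pos this _
        exact mul_nonneg (by linarith) this.le)
      (fun r hr => by
        have h0 : 0 < r := by linarith
        have hu : 0 < r ^ ((2 : ℝ) - d) := Real.rpow_pos_of_pos h0 _
        have e1 : r ^ ((1 : ℝ) - d) = r ^ ((2 : ℝ) - d) * r⁻¹ := by
          rw [show (1:ℝ) - d = 2 - d - 1 by ring, Real.rpow_sub_one h0.ne']
          ring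
        have e2 : r ^ ((d : ℝ) - 2) * r ^ ((2 : ℝ) - d) = 1 := by
          rw [← Real.rpow_add h0]; simp
        have e3 : r⁻¹ * (r - 1) = 1 - r⁻¹ := by field_simp
        have l1 := Real.one_sub_inv_le_log_of_pos h0
        have hv : 0 < r ^ ((d : ℝ) - 2) := Real.rpow_pos_of_pos h0 _
        have l2 := Real.log_le_sub_one_of_pos hv
        rw [Real.log_rpow h0] at l2
        have l3 : ((d:ℝ) - 2) * (1 - r⁻¹) ≤ r ^ ((d : ℝ) - 2) - 1 :=
          (mul_le_mul_of_nonneg_left l1 (by linarith)).trans l2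
        have l4 := mul_le_mul_of_nonneg_left l3 hu.le
        have l5 : 0 ≤ (α / β) * ((d : ℝ) - 2) := mul_nonneg hc (by linarith)
        calc ((d : ℝ) - 2) * r ^ ((1 : ℝ) - d) * (r - 1)
            = r ^ ((2 : ℝ) - d) * (((d:ℝ) - 2) * (1 - r⁻¹)) := by rw [e1, ← e3]; ring
          _ ≤ r ^ ((2 : ℝ) - d) * (r ^ ((d : ℝ) - 2) - 1) := l4
          _ = 1 - r ^ ((2 : ℝ) - d) := by linear_combination e2
          _ ≤ _ := by linarith)
    refine ⟨C, hC, ?_⟩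
    have e : ∀ y : EuclideanSpace ℝ (Fin d), Psi d α β y =
        1 - ‖y‖ ^ ((2 : ℝ) - d) + (α / β) * ((d : ℝ) - 2) := by
      intro y; simp [Psi, hβ, h2]
    simp only [e]
    exact h
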